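/- arXiv:1509.05810 — 2 statements merged into one kernel-verified Lean document; each statement's English description precedes it below -/
import Mathlib

section
/- Under the weight-matrix assumption and the moment conditions, every weight function w(σ) minimizing Γ(ν(w)) over positive weight functions is proportional to w_min(σ) := (σ² + Γ(A) Γ(B)⁻¹)⁻¹ with probability 1. -/
open MeasureTheory ProbabilityTheory Matrix

noncomputable section

/-- `E[x xᵀ]`, the second moment matrix of the random vector `x`. -/
def secondMoment {Ω : Type*} [MeasurableSpace Ω] {p : ℕ} (μ : Measure Ω)
    (x : Ω → Fin p → ℝ) : Matrix (Fin p) (Fin p) ℝ :=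
  Matrix.of fun j k => ∫ ω, x ω j * x ω k ∂μ

/-- `β = E[x xᵀ]⁻¹ E[x f(x)]`, the slope of the best linear approximation to `f`. -/
def bestLinear {Ω : Type*} [MeasurableSpace Ω] {p : ℕ} (μ : Measure Ω)
    (x : Ω → Fin p → ℝ) (f : (Fin p → ℝ) → ℝ) : Fin p → ℝ :=
  (secondMoment μ x)⁻¹ *ᵥ fun j => ∫ ω, x ω j * f (x ω) ∂μ

/-- `g(v) = f(v) − vᵀ β`, the nonlinear component of `f`. -/
def nonlinPart {Ω : Type*} [MeasurableSpace Ω] {p : ℕ} (μ : Measure Ω)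
    (x : Ω → Fin p → ℝ) (f : (Fin p → ℝ) → ℝ) (v : Fin p → ℝ) : ℝ :=
  f v - v ⬝ᵥ bestLinear μ x f

/-- `E[g(x)² x xᵀ]`. -/
def misspecMoment {Ω : Type*} [MeasurableSpace Ω] {p : ℕ} (μ : Measure Ω)
    (x : Ω → Fin p → ℝ) (f : (Fin p → ℝ) → ℝ) : Matrix (Fin p) (Fin p) ℝ :=
  Matrix.of fun j k => ∫ ω, (nonlinPart μ x f (x ω)) ^ 2 * (x ω j * x ω k) ∂μ

/-- `A = Bᵀ E[g(x)² x xᵀ] B` with `B = E[x xᵀ]⁻¹`. -/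
def matA {Ω : Type*} [MeasurableSpace Ω] {p : ℕ} (μ : Measure Ω)
    (x : Ω → Fin p → ℝ) (f : (Fin p → ℝ) → ℝ) : Matrix (Fin p) (Fin p) ℝ :=
  ((secondMoment μ x)⁻¹)ᵀ * misspecMoment μ x f * (secondMoment μ x)⁻¹

/-- The asymptotic covariance `ν(w)` of the weighted least squares estimator. -/
def asympVar {Ω : Type*} [MeasurableSpace Ω] {p : ℕ} (μ : Measure Ω)
    (x : Ω → Fin p → ℝ) (σ : Ω → ℝ) (f : (Fin p → ℝ) → ℝ) (w : ℝ → ℝ) :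
    Matrix (Fin p) (Fin p) ℝ :=
  ((∫ ω, w (σ ω) ∂μ) ^ 2)⁻¹ •
    ((∫ ω, (w (σ ω)) ^ 2 ∂μ) •
        ((secondMoment μ x)⁻¹ * misspecMoment μ x f * (secondMoment μ x)⁻¹)
      + (∫ ω, (σ ω) ^ 2 * (w (σ ω)) ^ 2 ∂μ) • (secondMoment μ x)⁻¹)

/-!
If `Γ B > 0` and `v = σ² + Γ A / Γ B`, then `Γ (ν w) = Γ B * E[w² v] / E[w]²`, a scalar functional
of `w`. Multiplying `w` by `1 + t` on a set `s` of values of `σ` and differentiating at `t = 0`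
gives `E[w] * E[w² v; s] = E[w² v] * E[w; s]` at a minimizer. As `s` is arbitrary,
`E[w] w² v = E[w² v] w` almost surely, that is, `w` is proportional to `v⁻¹`.
-/

open Set Filter
open scoped ENNReal Topology

section WeightedMeanVar

variable {α : Type*} [MeasurableSpace α] {ν : Measure α} {v W : α → ℝ} {s : Set α}

/-- `E[W² v] / E[W]²`: up to the factor `1 / n`, the limiting variance of the `W`-weighted mean of
`n` independent observations with variances `v`. It is the scalar functional of the weights to
which `Γ (ν w)` reduces. It takes the junk value `0` where `E[W] = 0`. -/
def weightedMeanVar (ν : Measure α) (v W : α → ℝ) : ℝ :=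
  (∫ a, W a ^ 2 * v a ∂ν) / (∫ a, W a ∂ν) ^ 2

lemma weightedMeanVar_map {Ω : Type*} [MeasurableSpace Ω] {μ : Measure Ω} {X : Ω → α}
    (hX : AEMeasurable X μ) (hv : Measurable v) (hW : Measurable W) :
    weightedMeanVar (μ.map X) v W = weightedMeanVar μ (v ∘ X) (W ∘ X) := by
  have hWv : Measurable fun a => W a ^ 2 * v a := (hW.pow_const 2).mul hv
  simp only [weightedMeanVar, Function.comp_apply, integral_map hX hWv.aestronglyMeasurable,
    integral_map hX hW.aestronglyMeasurable]

lemma weightedMeanVar_add_smul_indicator (hs : MeasurableSet s) (hW : Integrable W ν)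
    (hWv : Integrable (fun a => W a ^ 2 * v a) ν) (t : ℝ) :
    weightedMeanVar ν v (W + t • s.indicator W) =
      ((∫ a, W a ^ 2 * v a ∂ν) + (2 * t + t ^ 2) * ∫ a in s, W a ^ 2 * v a ∂ν) /
        ((∫ a, W a ∂ν) + t * ∫ a in s, W a ∂ν) ^ 2 := by
  have hsq : ∀ a, (W + t • s.indicator W) a ^ 2 * v a =
      W a ^ 2 * v a + (2 * t + t ^ 2) * s.indicator (fun a => W a ^ 2 * v a) a := by
    intro a
    by_cases ha : a ∈ s <;>
      simp only [Pi.add_apply, Pi.smul_apply, smul_eq_mul, ha, indicator_of_mem,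
        indicator_of_notMem, not_false_eq_true] <;> ring
  have hnum : ∫ a, (W + t • s.indicator W) a ^ 2 * v a ∂ν =
      (∫ a, W a ^ 2 * v a ∂ν) + (2 * t + t ^ 2) * ∫ a in s, W a ^ 2 * v a ∂ν := by
    simp_rw [hsq]
    rw [integral_add hWv ((hWv.indicator hs).const_mul _), integral_const_mul,
      integral_indicator hs]
  have hden : ∫ a, (W + t • s.indicator W) a ∂ν = (∫ a, W a ∂ν) + t * ∫ a in s, W a ∂ν := by
    simp only [Pi.add_apply, Pi.smul_apply, smul_eq_mul]
    rw [integral_add hW ((hW.indicator hs).const_mul _), integral_const_mul, integral_indicator hs]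
  rw [weightedMeanVar, hnum, hden]

lemma integral_mul_setIntegral_eq_of_isLocalMin_weightedMeanVar (hs : MeasurableSet s)
    (hW : Integrable W ν) (hWv : Integrable (fun a => W a ^ 2 * v a) ν) (hW0 : ∫ a, W a ∂ν ≠ 0)
    (hmin : IsLocalMin (fun t : ℝ => weightedMeanVar ν v (W + t • s.indicator W)) 0) :
    (∫ a, W a ∂ν) * ∫ a in s, W a ^ 2 * v a ∂ν = (∫ a, W a ^ 2 * v a ∂ν) * ∫ a in s, W a ∂ν := by
  simp only [weightedMeanVar_add_smul_indicator hs hW hWv] at hmin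
  set S := ∫ a, W a ∂ν
  set T := ∫ a, W a ^ 2 * v a ∂ν
  set R := ∫ a in s, W a ∂ν
  set P := ∫ a in s, W a ^ 2 * v a ∂ν
  have hnum : HasDerivAt (fun t : ℝ => T + (2 * t + t ^ 2) * P) (2 * P) 0 := by
    simpa using (((hasDerivAt_id (0 : ℝ)).const_mul 2).add
      ((hasDerivAt_id (0 : ℝ)).pow 2)).mul_const P |>.const_add T
  have hden : HasDerivAt (fun t : ℝ => (S + t * R) ^ 2) (2 * S * R) 0 := by
    simpa using (((hasDerivAt_id (0 : ℝ)).mul_const R).const_add S).fun_pow 2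
  have hderiv := hmin.hasDerivAt_eq_zero (hnum.div hden (by simpa using hW0))
  simp only [mul_zero, zero_mul, add_zero, ne_eq, OfNat.ofNat_ne_zero, not_false_eq_true, zero_pow,
    div_eq_zero_iff, pow_eq_zero_iff, hW0, or_false] at hderiv
  refine mul_left_cancel₀ hW0 ?_
  linear_combination hderiv / 2

theorem ae_eq_of_forall_weightedMeanVar_le (hWm : Measurable W) (hW : Integrable W ν)
    (hWv : Integrable (fun a => W a ^ 2 * v a) ν) (hW0 : ∫ a, W a ∂ν ≠ 0) {r : ℝ} (hr : 0 < r)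
    (hmin : ∀ W' : α → ℝ, Measurable W' → (∀ a, |W' a - W a| ≤ r * |W a|) →
      weightedMeanVar ν v W ≤ weightedMeanVar ν v W') :
    (fun a => (∫ b, W b ∂ν) * (W a ^ 2 * v a)) =ᵐ[ν]
      fun a => (∫ b, W b ^ 2 * v b ∂ν) * W a := by
  refine Integrable.ae_eq_of_forall_setIntegral_eq _ _ (hWv.const_mul _) (hW.const_mul _)
    fun s hs _ => ?_
  rw [integral_const_mul, integral_const_mul]
  refine integral_mul_setIntegral_eq_of_isLocalMin_weightedMeanVar hs hW hWv hW0 ?_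
  filter_upwards [Metric.closedBall_mem_nhds (0 : ℝ) hr] with t ht
  rw [zero_smul, add_zero]
  refine hmin _ (hWm.add ((hWm.indicator hs).const_smul t)) fun a => ?_
  have htr : |t| ≤ r := by simpa using ht
  calc |(W + t • s.indicator W) a - W a| = |t| * |s.indicator W a| := by simp [abs_mul]
    _ ≤ r * |W a| := mul_le_mul htr (norm_indicator_le_norm_self W a) (abs_nonneg _) hr.le

theorem ae_eq_of_forall_weightedMeanVar_comp_le {Ω : Type*} [MeasurableSpace Ω] {μ : Measure Ω}
    {X : Ω → α} (hX : AEMeasurable X μ) (hv : Measurable v) (hWm : Measurable W)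
    (hW : Integrable (W ∘ X) μ) (hWv : Integrable (fun ω => W (X ω) ^ 2 * v (X ω)) μ)
    (hW0 : ∫ ω, W (X ω) ∂μ ≠ 0) {r : ℝ} (hr : 0 < r)
    (hmin : ∀ W' : α → ℝ, Measurable W' → (∀ a, |W' a - W a| ≤ r * |W a|) →
      weightedMeanVar μ (v ∘ X) (W ∘ X) ≤ weightedMeanVar μ (v ∘ X) (W' ∘ X)) :
    (fun ω => (∫ ω', W (X ω') ∂μ) * (W (X ω) ^ 2 * v (X ω))) =ᵐ[μ]
      fun ω => (∫ ω', W (X ω') ^ 2 * v (X ω') ∂μ) * W (X ω) := by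
  have hWvm : Measurable fun a => W a ^ 2 * v a := (hWm.pow_const 2).mul hv
  have hmean : ∫ a, W a ∂μ.map X = ∫ ω, W (X ω) ∂μ := integral_map hX hWm.aestronglyMeasurable
  have hsq : ∫ a, W a ^ 2 * v a ∂μ.map X = ∫ ω, W (X ω) ^ 2 * v (X ω) ∂μ :=
    integral_map hX hWvm.aestronglyMeasurable
  have hlaw := ae_of_ae_map hX <| ae_eq_of_forall_weightedMeanVar_le hWm
    ((integrable_map_measure hWm.aestronglyMeasurable hX).2 hW)
    ((integrable_map_measure hWvm.aestronglyMeasurable hX).2 hWv)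
    (hmean ▸ hW0) hr fun W' hW'm hW' => by
      simpa only [weightedMeanVar_map hX hv hWm, weightedMeanVar_map hX hv hW'm]
        using hmin W' hW'm hW'
  rwa [hmean, hsq] at hlaw

end WeightedMeanVar

section PosSemidef

lemma posSemidef_integral_mul {Ω ι : Type*} [Finite ι] [MeasurableSpace Ω] {μ : Measure Ω}
    {X : ι → Ω → ℝ} (hX : ∀ i, MemLp (X i) 2 μ) :
    (Matrix.of fun i j => ∫ ω, X i ω * X j ω ∂μ).PosSemidef := by
  have hgram : Matrix.of (fun i j => ∫ ω, X i ω * X j ω ∂μ) =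
      gram ℝ fun i => (hX i).toLp (X i) := by
    ext i j
    rw [of_apply, gram_apply, L2.inner_def]
    refine integral_congr_ae ?_
    filter_upwards [(hX i).coeFn_toLp, (hX j).coeFn_toLp] with ω hi hj
    simp [hi, hj, mul_comm]
  exact hgram ▸ posSemidef_gram ℝ _

lemma map_nonneg_of_posSemidef {n : Type*} [Finite n]
    {Γ : Matrix n n ℝ →ₗ[ℝ] ℝ} (hΓ : ∀ C : Matrix n n ℝ, C.PosDef → 0 < Γ C)
    {A : Matrix n n ℝ} (hA : A.PosSemidef) : 0 ≤ Γ A := by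
  classical
  have := Fintype.ofFinite n
  have hpos : ∀ t : ℝ, 0 < t → 0 < Γ A + t * Γ 1 := fun t ht => by
    simpa using hΓ _ (PosDef.posSemidef_add hA (PosDef.one.smul ht))
  have hlim : Tendsto (fun t => Γ A + t * Γ 1) (𝓝[>] 0) (𝓝 (Γ A)) := by
    have : Continuous fun t => Γ A + t * Γ 1 := by fun_prop
    simpa using this.tendsto' 0 (Γ A) (by simp) |>.mono_left nhdsWithin_le_nhds
  exact ge_of_tendsto hlim (eventually_mem_nhdsWithin.mono fun t ht => (hpos t ht).le)

variable {Ω : Type*} [MeasurableSpace Ω] {μ : Measure Ω} {p : ℕ}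
  {x : Ω → Fin p → ℝ} {f : (Fin p → ℝ) → ℝ}

lemma posDef_inv_secondMoment (hx : ∀ j, MemLp (fun ω => x ω j) 2 μ)
    (hfull : IsUnit (secondMoment μ x).det) : (secondMoment μ x)⁻¹.PosDef :=
  ((posSemidef_integral_mul hx).posDef_iff_det_ne_zero.2 hfull.ne_zero).inv

lemma transpose_inv_secondMoment (μ : Measure Ω) (x : Ω → Fin p → ℝ) :
    (secondMoment μ x)⁻¹ᵀ = (secondMoment μ x)⁻¹ := by
  rw [transpose_nonsing_inv]
  congr 1
  ext j k
  simp only [secondMoment, transpose_apply, of_apply, mul_comm]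

lemma posSemidef_matA (hgx : ∀ j, MemLp (fun ω => nonlinPart μ x f (x ω) * x ω j) 2 μ) :
    (matA μ x f).PosSemidef := by
  have hmisspec : (misspecMoment μ x f).PosSemidef := by
    convert posSemidef_integral_mul hgx using 1
    ext j k
    simp only [misspecMoment, of_apply]
    congr with ω
    ring
  simpa only [matA, conjTranspose_eq_transpose_of_trivial] using
    hmisspec.conjTranspose_mul_mul_same (secondMoment μ x)⁻¹

end PosSemidef

section Moments

variable {Ω : Type*} [MeasurableSpace Ω] {μ : Measure Ω} {X Y : Ω → ℝ}

lemma memLp_of_norm_sub_le_mul_norm {E : Type*} [NormedAddCommGroup E] {q : ℝ≥0∞} {Z Z' : Ω → E}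
    {r : ℝ} (hZ : MemLp Z q μ) (hZ' : AEStronglyMeasurable Z' μ)
    (h : ∀ ω, ‖Z' ω - Z ω‖ ≤ r * ‖Z ω‖) : MemLp Z' q μ := by
  refine hZ.of_le_mul (c := 1 + r) hZ' (.of_forall fun ω => ?_)
  linarith [h ω, norm_sub_norm_le (Z' ω) (Z ω)]

lemma memLp_natCast_iff_integrable_pow {n : ℕ} (hn : Even n) (hn0 : n ≠ 0)
    (hX : AEStronglyMeasurable X μ) : MemLp X n μ ↔ Integrable (fun ω => X ω ^ n) μ := by
  rw [← integrable_norm_rpow_iff hX (Nat.cast_ne_zero.2 hn0) (ENNReal.natCast_ne_top n)]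
  simp only [ENNReal.toReal_natCast, Real.rpow_natCast, Real.norm_eq_abs, hn.pow_abs]

lemma memLp_four_iff_integrable_pow_four (hX : AEStronglyMeasurable X μ) :
    MemLp X 4 μ ↔ Integrable (fun ω => X ω ^ 4) μ :=
  mod_cast memLp_natCast_iff_integrable_pow (by decide : Even 4) four_ne_zero hX

lemma memLp_four_of_integrable_pow_four_mul_pow_four [IsFiniteMeasure μ]
    (hX : AEStronglyMeasurable X μ) (h : Integrable (fun ω => X ω ^ 4 * X ω ^ 4) μ) :
    MemLp X 4 μ := by
  simp only [← pow_add] at h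
  refine MemLp.mono_exponent ((memLp_natCast_iff_integrable_pow (by decide) (by decide) hX).2 h) ?_
  norm_num

lemma memLp_two_mul_of_memLp_four (hX : MemLp X 4 μ) (hY : MemLp Y 4 μ) :
    MemLp (fun ω => X ω * Y ω) 2 μ := by
  have : ENNReal.HolderTriple 4 4 2 := .of_toReal (by constructor <;> norm_num)
  exact hY.mul' hX

lemma integral_pos_of_forall_pos [NeZero μ] (hX : Integrable X μ) (hpos : ∀ ω, 0 < X ω) :
    0 < ∫ ω, X ω ∂μ := by
  have hsupp : Function.support X = univ := Function.support_eq_univ fun ω => (hpos ω).ne'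
  rw [integral_pos_iff_support_of_nonneg (fun ω => (hpos ω).le) hX, hsupp]
  exact NeZero.pos _

lemma measurable_nonlinPart {p : ℕ} {x : Ω → Fin p → ℝ} {f : (Fin p → ℝ) → ℝ}
    (hf : Measurable f) : Measurable (nonlinPart μ x f) := by
  unfold nonlinPart
  exact hf.sub (by unfold dotProduct; fun_prop)

lemma memLp_four_apply [IsFiniteMeasure μ] {ι : Type*} {x : Ω → ι → ℝ} (hx : Measurable x)
    {j : ι} (hx8 : Integrable (fun ω => x ω j ^ 4 * x ω j ^ 4) μ) : MemLp (fun ω => x ω j) 4 μ :=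
  memLp_four_of_integrable_pow_four_mul_pow_four
    ((measurable_pi_apply j).comp hx).aestronglyMeasurable hx8

lemma memLp_four_nonlinPart {p : ℕ} {x : Ω → Fin p → ℝ} {f : (Fin p → ℝ) → ℝ}
    (hx : Measurable x) (hf : Measurable f)
    (hg4 : Integrable (fun ω => nonlinPart μ x f (x ω) ^ 4) μ) :
    MemLp (fun ω => nonlinPart μ x f (x ω)) 4 μ :=
  (memLp_four_iff_integrable_pow_four
    ((measurable_nonlinPart hf).comp hx).aestronglyMeasurable).2 hg4

end Moments

lemma pos_of_abs_sub_le_mul_abs {a b r : ℝ} (hr : r < 1) (ha : 0 < a) (h : |b - a| ≤ r * |a|) :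
    0 < b := by
  rw [abs_of_pos ha] at h
  linarith [neg_le_of_abs_le h, mul_lt_of_lt_one_left ha hr]

section AsympVar

variable {Ω : Type*} [MeasurableSpace Ω] {μ : Measure Ω} {p : ℕ}
  {x : Ω → Fin p → ℝ} {σ : Ω → ℝ} {f : (Fin p → ℝ) → ℝ}
  {Γ : Matrix (Fin p) (Fin p) ℝ →ₗ[ℝ] ℝ} {w : ℝ → ℝ}

lemma integrable_sq_mul_sq_add_const (hw : MemLp (fun ω => w (σ ω)) 2 μ)
    (hσw : MemLp (fun ω => σ ω * w (σ ω)) 2 μ) (h : ℝ) :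
    Integrable (fun ω => w (σ ω) ^ 2 * (σ ω ^ 2 + h)) μ := by
  refine (hσw.integrable_sq.add (hw.integrable_sq.mul_const h)).congr (.of_forall fun ω => ?_)
  simp only [Pi.add_apply]
  ring

lemma map_asympVar_eq_mul_weightedMeanVar (hB : Γ (secondMoment μ x)⁻¹ ≠ 0)
    (hw : MemLp (fun ω => w (σ ω)) 2 μ) (hσw : MemLp (fun ω => σ ω * w (σ ω)) 2 μ) :
    Γ (asympVar μ x σ f w) = Γ (secondMoment μ x)⁻¹ *
      weightedMeanVar μ (fun ω => σ ω ^ 2 + Γ (matA μ x f) * (Γ (secondMoment μ x)⁻¹)⁻¹)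
        (fun ω => w (σ ω)) := by
  set h := Γ (matA μ x f) * (Γ (secondMoment μ x)⁻¹)⁻¹ with hh
  have hA : Γ (matA μ x f) = Γ (secondMoment μ x)⁻¹ * h := by rw [hh]; field_simp
  have hnum : ∫ ω, w (σ ω) ^ 2 * (σ ω ^ 2 + h) ∂μ =
      (∫ ω, σ ω ^ 2 * w (σ ω) ^ 2 ∂μ) + (∫ ω, w (σ ω) ^ 2 ∂μ) * h := by
    have hσw2 : Integrable (fun ω => σ ω ^ 2 * w (σ ω) ^ 2) μ := by
      simpa only [mul_pow] using hσw.integrable_sq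
    rw [← integral_mul_const, ← integral_add hσw2 (hw.integrable_sq.mul_const h)]
    congr with ω
    ring
  have hmatA : (secondMoment μ x)⁻¹ * misspecMoment μ x f * (secondMoment μ x)⁻¹ =
      matA μ x f := by rw [matA, transpose_inv_secondMoment]
  rw [asympVar, hmatA, weightedMeanVar, hnum]
  simp only [map_smul, map_add, smul_eq_mul, hA]
  ring

end AsympVar

theorem argmin_weights_proportional_to_wmin_general
    {Ω : Type*} [MeasurableSpace Ω] {μ : Measure Ω} {p : ℕ}
    {x : Ω → Fin p → ℝ} {σ : Ω → ℝ} {f : (Fin p → ℝ) → ℝ}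
    (hσ : AEMeasurable σ μ) (hσ0 : ∀ᵐ ω ∂μ, σ ω ≠ 0)
    (hfull : IsUnit (secondMoment μ x).det)
    (hx : ∀ j, MemLp (fun ω => x ω j) 2 μ)
    (hgx : ∀ j, MemLp (fun ω => nonlinPart μ x f (x ω) * x ω j) 2 μ)
    {Γ : Matrix (Fin p) (Fin p) ℝ →ₗ[ℝ] ℝ}
    (hΓ : ∀ C : Matrix (Fin p) (Fin p) ℝ, C.PosDef → 0 < Γ C)
    {w : ℝ → ℝ} (hwm : Measurable w) (hw0 : ∀ᵐ ω ∂μ, w (σ ω) ≠ 0)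
    (hw1 : Integrable (fun ω => w (σ ω)) μ) (hwmean : ∫ ω, w (σ ω) ∂μ ≠ 0)
    (hw2 : MemLp (fun ω => w (σ ω)) 2 μ) (hσw : MemLp (fun ω => σ ω * w (σ ω)) 2 μ)
    {r : ℝ} (hr : 0 < r)
    (hmin : ∀ w' : ℝ → ℝ, Measurable w' → (∀ s, |w' s - w s| ≤ r * |w s|) →
      Γ (asympVar μ x σ f w) ≤ Γ (asympVar μ x σ f w')) :
    ∃ c : ℝ, ∀ᵐ ω ∂μ,
      w (σ ω) = c * (σ ω ^ 2 + Γ (matA μ x f) * (Γ (secondMoment μ x)⁻¹)⁻¹)⁻¹ := by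
  have hB : 0 < Γ (secondMoment μ x)⁻¹ := hΓ _ (posDef_inv_secondMoment hx hfull)
  have hA : 0 ≤ Γ (matA μ x f) := map_nonneg_of_posSemidef hΓ (posSemidef_matA hgx)
  set h := Γ (matA μ x f) * (Γ (secondMoment μ x)⁻¹)⁻¹
  have hscalar : ∀ w' : ℝ → ℝ, Measurable w' → (∀ s, |w' s - w s| ≤ r * |w s|) →
      weightedMeanVar μ (fun ω => σ ω ^ 2 + h) (fun ω => w (σ ω)) ≤
        weightedMeanVar μ (fun ω => σ ω ^ 2 + h) (fun ω => w' (σ ω)) := by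
    intro w' hw'm hw'
    have hw'σ := (hw'm.comp_aemeasurable hσ).aestronglyMeasurable
    have hw'2 : MemLp (fun ω => w' (σ ω)) 2 μ :=
      memLp_of_norm_sub_le_mul_norm hw2 hw'σ fun ω => hw' (σ ω)
    have hσw' : MemLp (fun ω => σ ω * w' (σ ω)) 2 μ := by
      refine memLp_of_norm_sub_le_mul_norm (r := r) hσw (hσ.aestronglyMeasurable.mul hw'σ)
        fun ω => ?_
      rw [← mul_sub, norm_mul, norm_mul, mul_left_comm]
      exact mul_le_mul_of_nonneg_left (hw' (σ ω)) (norm_nonneg _)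
    refine le_of_mul_le_mul_left ?_ hB
    rw [← map_asympVar_eq_mul_weightedMeanVar hB.ne' hw2 hσw,
      ← map_asympVar_eq_mul_weightedMeanVar hB.ne' hw'2 hσw']
    exact hmin w' hw'm hw'
  have hcrit := ae_eq_of_forall_weightedMeanVar_comp_le (v := fun s => s ^ 2 + h) hσ
    (by fun_prop) hwm hw1 (integrable_sq_mul_sq_add_const hw2 hσw h) hwmean hr hscalar
  refine ⟨(∫ ω, w (σ ω) ^ 2 * (σ ω ^ 2 + h) ∂μ) / ∫ ω, w (σ ω) ∂μ, ?_⟩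
  filter_upwards [hcrit, hw0, hσ0] with ω hω hwω hσω
  have hv : σ ω ^ 2 + h ≠ 0 := by positivity
  rw [← div_eq_mul_inv, div_div, eq_div_iff (mul_ne_zero hwmean hv)]
  exact mul_right_cancel₀ hwω (by linear_combination hω)

/-- Under the moment conditions, every weight function minimizing
`Γ(ν(w))` over positive weight functions (with fourth moments) is proportional to
`w_min(σ) = (σ² + Γ(A) Γ(B)⁻¹)⁻¹` with probability one. -/
theorem argmin_weights_proportional_to_wmin
    {Ω : Type*} [MeasurableSpace Ω] (μ : Measure Ω) [IsProbabilityMeasure μ] {p : ℕ}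
    (x : Ω → Fin p → ℝ) (σ ε : Ω → ℝ) (f : (Fin p → ℝ) → ℝ)
    (hxmeas : Measurable x) (hσmeas : Measurable σ) (hεmeas : Measurable ε)
    (hfmeas : Measurable f)
    (hxσindep : IndepFun x σ μ)
    (hεindep : IndepFun ε (fun ω => (x ω, σ ω)) μ)
    (hεint : Integrable ε μ) (hεmean : ∫ ω, ε ω ∂μ = 0)
    (hεsq : Integrable (fun ω => (ε ω) ^ 2) μ) (hεvar : ∫ ω, (ε ω) ^ 2 ∂μ = 1)
    (hε4 : Integrable (fun ω => (ε ω) ^ 4) μ)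
    (hfull : IsUnit (secondMoment μ x).det)
    (hx8 : ∀ j k : Fin p, Integrable (fun ω => (x ω j) ^ 4 * (x ω k) ^ 4) μ)
    (hxf : ∀ j : Fin p, Integrable (fun ω => x ω j * f (x ω)) μ)
    (hg4 : Integrable (fun ω => (nonlinPart μ x f (x ω)) ^ 4) μ)
    (hσ4 : Integrable (fun ω => (σ ω) ^ 4) μ)
    (σmin : ℝ) (hσmin : 0 < σmin) (hσlb : ∀ᵐ ω ∂μ, σmin ≤ σ ω)
    (Γ : Matrix (Fin p) (Fin p) ℝ →ₗ[ℝ] ℝ)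
    (hΓ : ∀ C : Matrix (Fin p) (Fin p) ℝ, C.PosDef → 0 < Γ C)
    (w : ℝ → ℝ) (hwmeas : Measurable w) (hwpos : ∀ s : ℝ, 0 < w s)
    (hw4 : Integrable (fun ω => (w (σ ω)) ^ 4) μ)
    (hmin : ∀ w' : ℝ → ℝ, Measurable w' → (∀ s : ℝ, 0 < w' s) →
      Integrable (fun ω => (w' (σ ω)) ^ 4) μ →
      Γ (asympVar μ x σ f w) ≤ Γ (asympVar μ x σ f w')) :
    ∃ c : ℝ, ∀ᵐ ω ∂μ,
      w (σ ω) = c * ((σ ω) ^ 2 + Γ (matA μ x f) * (Γ ((secondMoment μ x)⁻¹))⁻¹)⁻¹ := by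
  have hx4 : ∀ j, MemLp (fun ω => x ω j) 4 μ := fun j => memLp_four_apply hxmeas (hx8 j j)
  have hg : MemLp (fun ω => nonlinPart μ x f (x ω)) 4 μ := memLp_four_nonlinPart hxmeas hfmeas hg4
  have hσ : MemLp σ 4 μ := (memLp_four_iff_integrable_pow_four hσmeas.aestronglyMeasurable).2 hσ4
  have hw : MemLp (fun ω => w (σ ω)) 4 μ :=
    (memLp_four_iff_integrable_pow_four (hwmeas.comp hσmeas).aestronglyMeasurable).2 hw4
  have hw1 : Integrable (fun ω => w (σ ω)) μ := hw.integrable (by norm_num)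
  refine argmin_weights_proportional_to_wmin_general hσmeas.aemeasurable
    (hσlb.mono fun ω hω => (hσmin.trans_le hω).ne') hfull
    (fun j => (hx4 j).mono_exponent (by norm_num)) (fun j => memLp_two_mul_of_memLp_four hg (hx4 j))
    hΓ hwmeas (.of_forall fun ω => (hwpos (σ ω)).ne') hw1
    (integral_pos_of_forall_pos hw1 fun ω => hwpos (σ ω)).ne'
    (hw.mono_exponent (by norm_num)) (memLp_two_mul_of_memLp_four hσ hw) one_half_pos
    fun w' hw'm hw' => hmin w' hw'm
      (fun s => pos_of_abs_sub_le_mul_abs one_half_lt_one (hwpos s) (hw' s)) ?_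
  have hw'σ := (hw'm.comp hσmeas).aestronglyMeasurable (μ := μ)
  exact (memLp_four_iff_integrable_pow_four hw'σ).1
    (memLp_of_norm_sub_le_mul_norm hw hw'σ fun ω => hw' (σ ω))
end
end

section
/- Suppose x ∈ ℝ^p and σ ∈ ℝ are possibly dependent random variables, (x_i, σ_i) are i.i.d. copies, y_i = f(x_i) + σ_i ε_i with ε_i i.i.d. mean 0 variance 1 independent of (x_i, σ_i), and W is the diagonal weight matrix with W_ii = w(σ_i) for a fixed function w. If E[x xᵀ w(σ)], E[w(σ) x f(x)], and E[x w(σ) σ] exist, E[x xᵀ] is positive definite, and E[x xᵀ w(σ)] is invertible, then β̂(W) := (Xᵀ W X)⁻¹ Xᵀ W Y converges almost surely to E[x xᵀ w(σ)]⁻¹ E[w(σ) x f(x)] as n → ∞. -/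
open MeasureTheory ProbabilityTheory Matrix Filter Topology

noncomputable section

/-- The `n × p` design matrix with rows `x_iᵀ`. -/
def designMatrix {Ω : Type*} {p : ℕ} (x : ℕ → Ω → Fin p → ℝ) (n : ℕ) (ω : Ω) :
    Matrix (Fin n) (Fin p) ℝ :=
  Matrix.of fun i j => x (i : ℕ) ω j

/-- The weighted least squares estimator `β̂(W) = (Xᵀ W X)⁻¹ Xᵀ W Y` with diagonal
weights `W_ii`. -/
def wlsEstimator {Ω : Type*} {p : ℕ} (x : ℕ → Ω → Fin p → ℝ) (y : ℕ → Ω → ℝ)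
    (What : (n : ℕ) → Ω → Fin n → ℝ) (n : ℕ) (ω : Ω) : Fin p → ℝ :=
  ((designMatrix x n ω)ᵀ * Matrix.diagonal (What n ω) * designMatrix x n ω)⁻¹ *ᵥ
    ((designMatrix x n ω)ᵀ *ᵥ (Matrix.diagonal (What n ω) *ᵥ fun i : Fin n => y (i : ℕ) ω))

/-!
Multiplying numerator and denominator by `1 / n` leaves `(Xᵀ W X)⁻¹ Xᵀ W Y` unchanged and turns the
entries of `Xᵀ W X` and `Xᵀ W Y` into averages of identically distributed, pairwise independent
variables. The strong law gives their limits, and matrix inversion is continuous at an invertible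
matrix. The noise does not contribute to the limit of `Xᵀ W Y / n`, because
`E[w(σ) x σ ε] = E[w(σ) x σ] E[ε] = 0`.
-/

section Matrix

variable {α ι κ R : Type*} [Fintype κ]

lemma tendsto_mulVec [NonUnitalNonAssocSemiring R] [TopologicalSpace R]
    [ContinuousAdd R] [ContinuousMul R] {l : Filter α} {G : α → Matrix ι κ R} {u : α → κ → R}
    {A : Matrix ι κ R} {b : κ → R} (hG : Tendsto G l (𝓝 A)) (hu : Tendsto u l (𝓝 b)) :
    Tendsto (fun i => G i *ᵥ u i) l (𝓝 (A *ᵥ b)) :=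
  tendsto_pi_nhds.2 fun j => tendsto_finsetSum _ fun k _ =>
    ((hG.apply_nhds j).apply_nhds k).mul (hu.apply_nhds k)

variable [DecidableEq κ]

lemma transpose_mul_diagonal_mul_apply [CommSemiring R] {ι' : Type*} (X : Matrix κ ι R)
    (v : κ → R) (Z : Matrix κ ι' R) (j : ι) (k : ι') :
    (Xᵀ * diagonal v * Z) j k = ∑ i, X i j * Z i k * v i := by
  rw [Matrix.mul_apply]
  refine Finset.sum_congr rfl fun i _ => ?_
  rw [mul_diagonal, transpose_apply]
  ring

lemma transpose_mulVec_diagonal_mulVec_apply [CommSemiring R] (X : Matrix κ ι R) (v y : κ → R)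
    (j : ι) : (Xᵀ *ᵥ (diagonal v *ᵥ y)) j = ∑ i, v i * X i j * y i := by
  rw [mulVec_eq_sum, Finset.sum_apply]
  refine Finset.sum_congr rfl fun i _ => ?_
  rw [mulVec_diagonal, Pi.smul_apply, op_smul_eq_mul, transpose_transpose]
  ring

lemma inv_smul_mulVec_smul [Field R] {c : R} (hc : c ≠ 0) (A : Matrix κ κ R) (b : κ → R) :
    (c • A)⁻¹ *ᵥ (c • b) = A⁻¹ *ᵥ b := by
  by_cases hA : IsUnit A.det
  · have hinv : (c • A)⁻¹ = c⁻¹ • A⁻¹ := inv_smul' A (Units.mk0 c hc) hA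
    rw [hinv, smul_mulVec, mulVec_smul, inv_smul_smul₀ hc]
  · have hcA : ¬IsUnit (c • A).det := by
      rwa [det_smul, IsUnit.mul_iff, and_iff_right (hc.isUnit.pow _)]
    rw [nonsing_inv_apply_not_isUnit A hA, nonsing_inv_apply_not_isUnit _ hcA, zero_mulVec,
      zero_mulVec]

lemma tendsto_inv_mulVec [Field R] [TopologicalSpace R] [IsTopologicalDivisionRing R]
    {l : Filter α} {G : α → Matrix κ κ R} {u : α → κ → R} {A : Matrix κ κ R} {b : κ → R}
    (hA : IsUnit A.det) (hG : Tendsto G l (𝓝 A)) (hu : Tendsto u l (𝓝 b)) :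
    Tendsto (fun i => (G i)⁻¹ *ᵥ u i) l (𝓝 (A⁻¹ *ᵥ b)) := by
  have hinverse : ContinuousAt Ring.inverse A.det := by
    rw [Ring.inverse_eq_inv']
    exact continuousAt_inv₀ hA.ne_zero
  have hGinv : Tendsto (fun i => (G i)⁻¹) l (𝓝 A⁻¹) :=
    (continuousAt_matrix_inv A hinverse).tendsto.comp hG
  exact tendsto_mulVec hGinv hu

end Matrix

section Probability

variable {Ω : Type*} [MeasurableSpace Ω] {μ : Measure Ω}

lemma strong_law_ae_comp {α E : Type*} [MeasurableSpace α] [NormedAddCommGroup E]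
    [NormedSpace ℝ E] [CompleteSpace E] [MeasurableSpace E] [BorelSpace E] {Z : ℕ → Ω → α}
    (hindep : Pairwise fun i j => IndepFun (Z i) (Z j) μ)
    (hident : ∀ i, IdentDistrib (Z i) (Z 0) μ μ) {g : α → E} (hg : Measurable g)
    (hint : Integrable (fun ω => g (Z 0 ω)) μ) :
    ∀ᵐ ω ∂μ, Tendsto (fun n : ℕ => (n : ℝ)⁻¹ • ∑ i ∈ Finset.range n, g (Z i ω)) atTop
      (𝓝 (∫ ω, g (Z 0 ω) ∂μ)) :=
  strong_law_ae (fun i ω => g (Z i ω)) hint (fun _ _ hij => (hindep hij).comp hg hg)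
    fun i => (hident i).comp hg

variable {𝕜 : Type*} [RCLike 𝕜] {a b ε : Ω → 𝕜}

lemma integrable_add_mul_of_indepFun (hbε : IndepFun b ε μ) (ha : Integrable a μ)
    (hb : Integrable b μ) (hε : Integrable ε μ) : Integrable (fun ω => a ω + b ω * ε ω) μ :=
  ha.add (hbε.integrable_mul hb hε)

lemma integral_add_mul_of_indepFun (hbε : IndepFun b ε μ) (ha : Integrable a μ)
    (hb : Integrable b μ) (hε : Integrable ε μ) (hε0 : ∫ ω, ε ω ∂μ = 0) :
    ∫ ω, a ω + b ω * ε ω ∂μ = ∫ ω, a ω ∂μ := by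
  have hnoise : ∫ ω, b ω * ε ω ∂μ = 0 := by
    simpa only [hε0, mul_zero] using
      hbε.integral_fun_mul_eq_mul_integral hb.aestronglyMeasurable hε.aestronglyMeasurable
  rw [integral_add ha (g := fun ω => b ω * ε ω) (hbε.integrable_mul hb hε), hnoise, add_zero]

end Probability

section WeightedLeastSquares

variable {Ω : Type*} [MeasurableSpace Ω] {p : ℕ}

/-- `E[x xᵀ v]`, the limit of `Xᵀ W X / n` for random weights `W_ii` distributed as `v`. An entry
whose integrand is not integrable is `0`. -/
def weightedSecondMoment (μ : Measure Ω) (x : Ω → Fin p → ℝ) (v : Ω → ℝ) :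
    Matrix (Fin p) (Fin p) ℝ :=
  Matrix.of fun j k => ∫ ω, x ω j * x ω k * v ω ∂μ

/-- `E[v x y]`, the limit of `Xᵀ W Y / n` for random weights `W_ii` distributed as `v`. A coordinate
whose integrand is not integrable is `0`. -/
def weightedCrossMoment (μ : Measure Ω) (x : Ω → Fin p → ℝ) (v y : Ω → ℝ) : Fin p → ℝ :=
  fun j => ∫ ω, v ω * x ω j * y ω ∂μ

variable {μ : Measure Ω}

theorem tendsto_wlsEstimator_ae {x : ℕ → Ω → Fin p → ℝ} {v y : ℕ → Ω → ℝ}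
    (hindep : Pairwise fun i j =>
      IndepFun (fun ω => (x i ω, v i ω, y i ω)) (fun ω => (x j ω, v j ω, y j ω)) μ)
    (hident : ∀ i, IdentDistrib (fun ω => (x i ω, v i ω, y i ω))
      (fun ω => (x 0 ω, v 0 ω, y 0 ω)) μ μ)
    (hxxv : ∀ j k, Integrable (fun ω => x 0 ω j * x 0 ω k * v 0 ω) μ)
    (hvxy : ∀ j, Integrable (fun ω => v 0 ω * x 0 ω j * y 0 ω) μ)
    (hinv : IsUnit (weightedSecondMoment μ (x 0) (v 0)).det) :
    ∀ᵐ ω ∂μ, Tendsto (fun n => wlsEstimator x y (fun _ ω' i => v i ω') n ω) atTop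
      (𝓝 ((weightedSecondMoment μ (x 0) (v 0))⁻¹ *ᵥ
        weightedCrossMoment μ (x 0) (v 0) (y 0))) := by
  have hgram := fun j k => strong_law_ae_comp hindep hident
    (g := fun z => z.1 j * z.1 k * z.2.1) (by fun_prop) (hxxv j k)
  have hcross := fun j => strong_law_ae_comp hindep hident
    (g := fun z => z.2.1 * z.1 j * z.2.2) (by fun_prop) (hvxy j)
  filter_upwards [ae_all_iff.2 fun j => ae_all_iff.2 (hgram j), ae_all_iff.2 hcross]
    with ω hgramω hcrossω
  let X n := designMatrix x n ω
  let V n := diagonal fun i : Fin n => v i ω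
  let Y n := fun i : Fin n => y i ω
  have hG : Tendsto (fun n : ℕ => (n : ℝ)⁻¹ • ((X n)ᵀ * V n * X n)) atTop
      (𝓝 (weightedSecondMoment μ (x 0) (v 0))) := by
    refine tendsto_pi_nhds.2 fun j => tendsto_pi_nhds.2 fun k => (hgramω j k).congr fun n => ?_
    rw [Matrix.smul_apply, transpose_mul_diagonal_mul_apply, Finset.sum_range]
    rfl
  have hu : Tendsto (fun n : ℕ => (n : ℝ)⁻¹ • ((X n)ᵀ *ᵥ (V n *ᵥ Y n))) atTop
      (𝓝 (weightedCrossMoment μ (x 0) (v 0) (y 0))) := by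
    refine tendsto_pi_nhds.2 fun j => (hcrossω j).congr fun n => ?_
    rw [Pi.smul_apply, transpose_mulVec_diagonal_mulVec_apply, Finset.sum_range]
    rfl
  refine (tendsto_inv_mulVec hinv hG hu).congr' ?_
  filter_upwards [eventually_ne_atTop 0] with n hn
  exact inv_smul_mulVec_smul (inv_ne_zero (Nat.cast_ne_zero.2 hn)) _ _

section Noise

variable {x : Ω → Fin p → ℝ} {v m σ ε : Ω → ℝ}

lemma integrable_weight_mul_add_noise {j : Fin p}
    (hindep : IndepFun (fun ω => x ω j * v ω * σ ω) ε μ)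
    (hm : Integrable (fun ω => v ω * x ω j * m ω) μ)
    (hσ : Integrable (fun ω => x ω j * v ω * σ ω) μ) (hε : Integrable ε μ) :
    Integrable (fun ω => v ω * x ω j * (m ω + σ ω * ε ω)) μ :=
  (integrable_add_mul_of_indepFun hindep hm hσ hε).congr (.of_forall fun ω => by ring)

lemma weightedCrossMoment_add_noise
    (hindep : ∀ j, IndepFun (fun ω => x ω j * v ω * σ ω) ε μ)
    (hm : ∀ j, Integrable (fun ω => v ω * x ω j * m ω) μ)
    (hσ : ∀ j, Integrable (fun ω => x ω j * v ω * σ ω) μ) (hε : Integrable ε μ)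
    (hε0 : ∫ ω, ε ω ∂μ = 0) :
    weightedCrossMoment μ x v (fun ω => m ω + σ ω * ε ω) = weightedCrossMoment μ x v m := by
  funext j
  calc ∫ ω, v ω * x ω j * (m ω + σ ω * ε ω) ∂μ
    _ = ∫ ω, v ω * x ω j * m ω + x ω j * v ω * σ ω * ε ω ∂μ :=
      integral_congr_ae (.of_forall fun ω => by ring)
    _ = ∫ ω, v ω * x ω j * m ω ∂μ :=
      integral_add_mul_of_indepFun (hindep j) (hm j) (hσ j) hε hε0

end Noise

theorem wls_limit_dependent_errors_general
    {x : ℕ → Ω → Fin p → ℝ} {σ ε y : ℕ → Ω → ℝ} {f : (Fin p → ℝ) → ℝ} {w : ℝ → ℝ}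
    (hy : ∀ i ω, y i ω = f (x i ω) + σ i ω * ε i ω)
    (hfmeas : Measurable f) (hwmeas : Measurable w)
    (hindep : Pairwise fun i j =>
      IndepFun (fun ω => (x i ω, σ i ω, ε i ω)) (fun ω => (x j ω, σ j ω, ε j ω)) μ)
    (hident : ∀ i, IdentDistrib (fun ω => (x i ω, σ i ω, ε i ω))
      (fun ω => (x 0 ω, σ 0 ω, ε 0 ω)) μ μ)
    (hεindep : IndepFun (ε 0) (fun ω => (x 0 ω, σ 0 ω)) μ)
    (hεint : Integrable (ε 0) μ) (hεmean : ∫ ω, ε 0 ω ∂μ = 0)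
    (hxxw : ∀ j k, Integrable (fun ω => x 0 ω j * x 0 ω k * w (σ 0 ω)) μ)
    (hwxf : ∀ j, Integrable (fun ω => w (σ 0 ω) * x 0 ω j * f (x 0 ω)) μ)
    (hxwσ : ∀ j, Integrable (fun ω => x 0 ω j * w (σ 0 ω) * σ 0 ω) μ)
    (hWinv : IsUnit (weightedSecondMoment μ (x 0) fun ω => w (σ 0 ω)).det) :
    ∀ᵐ ω ∂μ, Tendsto (fun n => wlsEstimator x y (fun _ ω' i => w (σ i ω')) n ω) atTop
      (𝓝 ((weightedSecondMoment μ (x 0) fun ω' => w (σ 0 ω'))⁻¹ *ᵥ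
        weightedCrossMoment μ (x 0) (fun ω' => w (σ 0 ω')) fun ω' => f (x 0 ω'))) := by
  obtain rfl : y = fun i ω => f (x i ω) + σ i ω * ε i ω := funext fun i => funext (hy i)
  have hobs : Measurable fun z : (Fin p → ℝ) × ℝ × ℝ =>
      (z.1, w z.2.1, f z.1 + z.2.1 * z.2.2) := by fun_prop
  have hnoise (j : Fin p) : IndepFun (fun ω => x 0 ω j * w (σ 0 ω) * σ 0 ω) (ε 0) μ :=
    hεindep.symm.comp
      (φ := fun z : (Fin p → ℝ) × ℝ => z.1 j * w z.2 * z.2) (by fun_prop) measurable_id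
  have hint (j : Fin p) :=
    integrable_weight_mul_add_noise (hnoise j) (hwxf j) (hxwσ j) hεint
  have hlim := tendsto_wlsEstimator_ae (fun _ _ hij => (hindep hij).comp hobs hobs)
    (fun i => (hident i).comp hobs) hxxw hint hWinv
  rwa [weightedCrossMoment_add_noise hnoise hwxf hxwσ hεint hεmean] at hlim

end WeightedLeastSquares

/-- When `x` and `σ` may be dependent, the weighted least squares
estimator with weights `w(σ_i)` converges almost surely to
`E[x xᵀ w(σ)]⁻¹ E[w(σ) x f(x)]` (which need not equal `β`). -/
theorem wls_limit_dependent_errors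
    {Ω : Type*} [MeasurableSpace Ω] (μ : Measure Ω) [IsProbabilityMeasure μ] {p : ℕ}
    (x : ℕ → Ω → Fin p → ℝ) (σ ε : ℕ → Ω → ℝ) (f : (Fin p → ℝ) → ℝ) (w : ℝ → ℝ)
    (y : ℕ → Ω → ℝ)
    (hy : ∀ i ω, y i ω = f (x i ω) + σ i ω * ε i ω)
    (hxmeas : ∀ i, Measurable (x i)) (hσmeas : ∀ i, Measurable (σ i))
    (hεmeas : ∀ i, Measurable (ε i)) (hfmeas : Measurable f) (hwmeas : Measurable w)
    (hindep : iIndepFun (fun i ω => (x i ω, σ i ω, ε i ω)) μ)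
    (hident : ∀ i, IdentDistrib (fun ω => (x i ω, σ i ω, ε i ω))
      (fun ω => (x 0 ω, σ 0 ω, ε 0 ω)) μ μ)
    (hεindep : ∀ i, IndepFun (ε i) (fun ω => (x i ω, σ i ω)) μ)
    (hεint : Integrable (ε 0) μ) (hεmean : ∫ ω, ε 0 ω ∂μ = 0)
    (hεsq : Integrable (fun ω => (ε 0 ω) ^ 2) μ) (hεvar : ∫ ω, (ε 0 ω) ^ 2 ∂μ = 1)
    (hxxw : ∀ j k : Fin p, Integrable (fun ω => x 0 ω j * x 0 ω k * w (σ 0 ω)) μ)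
    (hwxf : ∀ j : Fin p, Integrable (fun ω => w (σ 0 ω) * x 0 ω j * f (x 0 ω)) μ)
    (hxwσ : ∀ j : Fin p, Integrable (fun ω => x 0 ω j * w (σ 0 ω) * σ 0 ω) μ)
    (hposdef : (secondMoment μ (x 0)).PosDef)
    (hWinv : IsUnit
      (Matrix.of fun j k => ∫ ω, x 0 ω j * x 0 ω k * w (σ 0 ω) ∂μ :
        Matrix (Fin p) (Fin p) ℝ).det) :
    ∀ᵐ ω ∂μ,
      Tendsto (fun n => wlsEstimator x y (fun _ ω' i => w (σ (i : ℕ) ω')) n ω) atTop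
        (𝓝 ((Matrix.of fun j k => ∫ ω', x 0 ω' j * x 0 ω' k * w (σ 0 ω') ∂μ :
              Matrix (Fin p) (Fin p) ℝ)⁻¹ *ᵥ
            fun j => ∫ ω', w (σ 0 ω') * x 0 ω' j * f (x 0 ω') ∂μ)) :=
  wls_limit_dependent_errors_general hy hfmeas hwmeas (fun _ _ hij => hindep.indepFun hij) hident
    (hεindep 0) hεint hεmean hxxw hwxf hxwσ hWinv
end
end
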